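/- Write Ω = {(x, y) : x ∈ [a, b], φ₁(x) ≤ y ≤ φ₂(x)} with φ₁ convex and φ₂ concave on [a, b]. Suppose at least one of the two vertical lines of support of Ω is not angular, i.e. φ₂(a) > φ₁(a), or φ₂(b) > φ₁(b), or at least one of the one-sided derivatives φ₂'(a+), −φ₁'(a+), −φ₂'(b−), φ₁'(b−) equals +∞. Then K_∞(Ω) = sup{ ‖u_x‖_∞ / ‖u_y‖_∞ : u ∈ 𝒰_Ω, u ≢ 0 } = +∞, i.e. for every C > 0 there exists a nonzero u ∈ 𝒰_Ω with ‖u_x‖_∞ > C ‖u_y‖_∞. -/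

import Mathlib

open Set MeasureTheory
open scoped ENNReal

/-- Partial derivative of `u` in the `x` direction (junk value where `u` is not
differentiable). -/
noncomputable def ux (u : ℝ × ℝ → ℝ) (z : ℝ × ℝ) : ℝ := fderiv ℝ u z (1, 0)

/-- Partial derivative of `u` in the `y` direction. -/
noncomputable def uy (u : ℝ × ℝ → ℝ) (z : ℝ × ℝ) : ℝ := fderiv ℝ u z (0, 1)

/-- Directional derivative of `u` in the direction `h`. -/
noncomputable def uh (h : ℝ × ℝ) (u : ℝ × ℝ → ℝ) (z : ℝ × ℝ) : ℝ := fderiv ℝ u z h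

/-- The class `𝒰_Ω`: continuous concave functions on `Ω` vanishing on the boundary,
with uniformly bounded gradient over all interior points where it exists. -/
def MemU (Ω : Set (ℝ × ℝ)) (u : ℝ × ℝ → ℝ) : Prop :=
  ContinuousOn u Ω ∧ ConcaveOn ℝ Ω u ∧ (∀ z ∈ frontier Ω, u z = 0) ∧
    ∃ C : ℝ, ∀ z ∈ interior Ω, ∀ g : (ℝ × ℝ) →L[ℝ] ℝ, HasFDerivAt u g z → ‖g‖ ≤ C

/-- The `L¹` norm of `f` over `Ω`. -/
noncomputable def L1N (Ω : Set (ℝ × ℝ)) (f : ℝ × ℝ → ℝ) : ℝ := ∫ z in Ω, |f z|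

/-- The `L^p` norm of `f` over `Ω`, `p ∈ [1, ∞)`. -/
noncomputable def LpN (Ω : Set (ℝ × ℝ)) (p : ℝ) (f : ℝ × ℝ → ℝ) : ℝ :=
  (∫ z in Ω, |f z| ^ p) ^ (1 / p)

/-- The `L^∞` norm (essential supremum) of `f` over `Ω`. -/
noncomputable def LinfN (Ω : Set (ℝ × ℝ)) (f : ℝ × ℝ → ℝ) : ℝ≥0∞ :=
  essSup (fun z => ENNReal.ofReal |f z|) (volume.restrict Ω)

/-- The width of `Ω` parallel to the (Euclidean unit) vector `h`: the distance between the
two lines of support of `Ω` parallel to `h`, i.e. the oscillation over `Ω` of the linear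
functional given by the unit normal `(-h.2, h.1)` to `h`. -/
noncomputable def widthPar (Ω : Set (ℝ × ℝ)) (h : ℝ × ℝ) : ℝ :=
  sSup ((fun z : ℝ × ℝ => -h.2 * z.1 + h.1 * z.2) '' Ω) -
    sInf ((fun z : ℝ × ℝ => -h.2 * z.1 + h.1 * z.2) '' Ω)

/-- The distance to the complement of a convex set, measured after a linear map, is concave. -/
theorem concaveOn_infDist_image_compl {E F : Type*} [NormedAddCommGroup E] [NormedSpace ℝ E]
    [NormedAddCommGroup F] [NormedSpace ℝ F] (S : E →ₗ[ℝ] F) {K : Set E} (hK : Convex ℝ K)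
    (hne : Kᶜ.Nonempty) : ConcaveOn ℝ K fun z => Metric.infDist (S z) (S '' Kᶜ) := by
  refine ⟨hK, fun p hp q hq s t hs ht hst => ?_⟩
  set r₁ := Metric.infDist (S p) (S '' Kᶜ) with hr₁
  set r₂ := Metric.infDist (S q) (S '' Kᶜ) with hr₂
  have h₁ : 0 ≤ r₁ := Metric.infDist_nonneg
  have h₂ : 0 ≤ r₂ := Metric.infDist_nonneg
  simp only [smul_eq_mul]
  refine (Metric.le_infDist (hne.image S)).2 ?_
  rintro _ ⟨w, hw, rfl⟩
  by_contra! hlt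
  apply hw
  set R := s * r₁ + t * r₂ with hR
  have hRpos : 0 < R := dist_nonneg.trans_lt hlt
  set d := w - (s • p + t • q) with hd
  have hdist : ‖S d‖ < R := by
    rw [hd, map_sub, ← dist_eq_norm, dist_comm]; exact hlt
  have inside : ∀ z ∈ K, z + (Metric.infDist (S z) (S '' Kᶜ) / R) • d ∈ K := by
    intro z hz
    rcases (Metric.infDist_nonneg (x := S z) (s := S '' Kᶜ)).eq_or_lt with h0 | h0
    · simpa [← h0] using hz
    · by_contra hnot
      refine Metric.notMem_of_dist_lt_infDist (x := S z) (s := S '' Kᶜ) ?_ ⟨_, hnot, rfl⟩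
      rw [dist_comm, dist_eq_norm, map_add, add_sub_cancel_left, map_smul, norm_smul,
        Real.norm_of_nonneg (by positivity), div_mul_eq_mul_div, div_lt_iff₀ hRpos]
      exact mul_lt_mul_of_pos_left hdist h0
  have hcomb := hK (inside p hp) (inside q hq) hs ht hst
  have hone : s * (r₁ / R) + t * (r₂ / R) = 1 := by
    rw [← mul_div_assoc, ← mul_div_assoc, ← add_div, ← hR, div_self hRpos.ne']
  have heq : s • (p + (r₁ / R) • d) + t • (q + (r₂ / R) • d) = w := by
    calc s • (p + (r₁ / R) • d) + t • (q + (r₂ / R) • d)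
        = (s • p + t • q) + (s * (r₁ / R) + t * (r₂ / R)) • d := by module
      _ = w := by rw [hone, hd]; module
  rwa [← hr₁, ← hr₂, heq] at hcomb

/-- The tangent plane of a concave function at an interior point lies above its graph. -/
theorem ConcaveOn.le_add_of_hasFDerivAt {E : Type*} [NormedAddCommGroup E] [NormedSpace ℝ E]
    {K : Set E} {f : E → ℝ} (hf : ConcaveOn ℝ K f) {p m : E} (hp : p ∈ K) (hm : m ∈ K)
    {g : E →L[ℝ] ℝ} (hg : HasFDerivAt f g p) : f m ≤ f p + g (m - p) := by
  have hline : ConcaveOn ℝ (AffineMap.lineMap p m ⁻¹' K) (f ∘ (AffineMap.lineMap p m : ℝ →ᵃ[ℝ] E)) :=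
    hf.comp_affineMap _
  have hderiv : HasDerivAt (f ∘ (AffineMap.lineMap p m : ℝ →ᵃ[ℝ] E)) (g (m - p)) 0 :=
    HasFDerivAt.comp_hasDerivAt (0 : ℝ) (by simpa using hg) AffineMap.hasDerivAt_lineMap
  have := hline.slope_le_of_hasDerivAt (x := 0) (y := 1) (by simpa using hp) (by simpa using hm)
    one_pos hderiv
  simp [slope_def_field] at this
  simpa using by linarith

/-- A connected set meeting a closed set and its complement meets the frontier. -/
theorem IsPreconnected.exists_mem_frontier {X : Type*} [TopologicalSpace X] {s K : Set X}
    (hs : IsPreconnected s) (hK : IsClosed K) {p q : X} (hp : p ∈ s) (hpK : p ∈ K)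
    (hq : q ∈ s) (hqK : q ∉ K) : ∃ w ∈ s, w ∈ frontier K := by
  by_contra! h
  rw [hK.frontier_eq] at h
  have hKint : ∀ z ∈ s, z ∈ K → z ∈ interior K := fun z hz hzK => by
    by_contra hzi
    exact h z hz ⟨hzK, hzi⟩
  obtain ⟨z, -, hz, hzK⟩ := hs (interior K) Kᶜ isOpen_interior hK.isOpen_compl
    (fun z hz => (em (z ∈ K)).imp (hKint z hz) id) ⟨p, hp, hKint p hp hpK⟩ ⟨q, hq, hqK⟩
  exact hzK (interior_subset hz)

/-- The linear map stretching the first coordinate by the factor `N`. -/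
noncomputable def stretchFst (N : ℝ) : (ℝ × ℝ) →L[ℝ] ℝ × ℝ :=
  (N • ContinuousLinearMap.fst ℝ ℝ ℝ).prod (ContinuousLinearMap.snd ℝ ℝ ℝ)

@[simp]
theorem stretchFst_apply (N : ℝ) (z : ℝ × ℝ) : stretchFst N z = (N * z.1, z.2) := rfl

/-- The distance to the complement of `K`, after stretching the first coordinate by `N`. -/
noncomputable def stretchDist (K : Set (ℝ × ℝ)) (N : ℝ) (z : ℝ × ℝ) : ℝ :=
  Metric.infDist (stretchFst N z) (stretchFst N '' Kᶜ)

theorem lipschitzWith_stretchDist (K : Set (ℝ × ℝ)) (N : ℝ) :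
    LipschitzWith ‖stretchFst N‖₊ (stretchDist K N) := by
  rw [← one_mul ‖stretchFst N‖₊]
  exact (Metric.lipschitz_infDist_pt (stretchFst N '' Kᶜ)).comp (stretchFst N).lipschitz

theorem stretchDist_eq_zero {K : Set (ℝ × ℝ)} {N : ℝ} {z : ℝ × ℝ} (hz : z ∈ frontier K) :
    stretchDist K N z = 0 := by
  rw [frontier_eq_closure_inter_closure] at hz
  exact Metric.infDist_zero_of_mem_closure
    (image_closure_subset_closure_image (stretchFst N).continuous (mem_image_of_mem _ hz.2))

theorem memU_stretchDist {K : Set (ℝ × ℝ)} (hK : Convex ℝ K) (hne : Kᶜ.Nonempty) (N : ℝ) :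
    MemU K (stretchDist K N) :=
  ⟨(lipschitzWith_stretchDist K N).continuous.continuousOn,
    concaveOn_infDist_image_compl (stretchFst N : (ℝ × ℝ) →ₗ[ℝ] ℝ × ℝ) hK hne,
    fun _ hz => stretchDist_eq_zero hz,
    ⟨_, fun _ _ _ hg => hg.le_of_lipschitz (lipschitzWith_stretchDist K N)⟩⟩

theorem abs_uy_stretchDist_le (K : Set (ℝ × ℝ)) (N : ℝ) (z : ℝ × ℝ) :
    |uy (stretchDist K N) z| ≤ 1 := by
  by_cases hd : DifferentiableAt ℝ (stretchDist K N) z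
  · have hline : HasDerivAt (fun t : ℝ => (z.1, t)) ((0 : ℝ), (1 : ℝ)) z.2 :=
      (hasDerivAt_const z.2 z.1).prodMk (hasDerivAt_id z.2)
    have hderiv : HasDerivAt (fun t : ℝ => stretchDist K N (z.1, t)) (uy (stretchDist K N) z) z.2 :=
      HasFDerivAt.comp_hasDerivAt (f := fun t : ℝ => (z.1, t)) z.2 hd.hasFDerivAt hline
    have hlip : LipschitzWith 1 fun t : ℝ => stretchDist K N (z.1, t) := by
      refine LipschitzWith.of_dist_le_mul fun s t => ?_
      simpa [stretchDist, Prod.dist_eq] using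
        (Metric.lipschitz_infDist_pt (stretchFst N '' Kᶜ)).dist_le_mul
          (stretchFst N (z.1, s)) (stretchFst N (z.1, t))
    have hbound := norm_deriv_le_of_lipschitz (x₀ := z.2) hlip
    rw [hderiv.deriv] at hbound
    simpa using hbound
  · simp [uy, fderiv_zero_of_not_differentiableAt hd]

/-- If `u` exceeds at `m` what slopes `C` and `1` allow for, starting from a zero `w` of `u`,
then `u_x` exceeds `C` on a set of positive measure. -/
theorem lt_linfN_ux {K : Set (ℝ × ℝ)} {u : ℝ × ℝ → ℝ} {L : NNReal} {C : ℝ}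
    (hu : LipschitzWith L u) (hconc : ConcaveOn ℝ K u) (hKint : (interior K).Nonempty)
    (huy : ∀ z, |uy u z| ≤ 1) (hC : 0 ≤ C) {m w : ℝ × ℝ} (hm : m ∈ K) (hw : w ∈ closure K)
    (hw0 : u w = 0) (hlt : C * |m.1 - w.1| + |m.2 - w.2| < u m) :
    ENNReal.ofReal C < LinfN K (ux u) := by
  by_contra! hle
  have hcont := hu.continuous
  set V : Set (ℝ × ℝ) := {p | C * |m.1 - p.1| + |m.2 - p.2| < u m - u p} with hV
  have hVo : IsOpen V := isOpen_lt (by fun_prop) (by fun_prop)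
  rw [← hconc.1.closure_interior_eq_closure_of_nonempty_interior hKint] at hw
  have hVne : (V ∩ interior K).Nonempty :=
    mem_closure_iff.1 hw V hVo (by simpa [hV, hw0] using hlt)
  have hpos : volume (V ∩ interior K) ≠ 0 :=
    ((hVo.inter isOpen_interior).measure_pos volume hVne).ne'
  have hae : ∀ᵐ p ∂volume.restrict (V ∩ interior K),
      ENNReal.ofReal |ux u p| ≤ essSup (fun z => ENNReal.ofReal |ux u z|) (volume.restrict K) :=
    ae_restrict_of_ae_restrict_of_subset (inter_subset_right.trans interior_subset)
      (ENNReal.ae_le_essSup _)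
  have hdiff : ∀ᵐ p ∂volume.restrict (V ∩ interior K), DifferentiableAt ℝ u p :=
    ae_restrict_of_ae hu.ae_differentiableAt
  have hmem : ∀ᵐ p ∂volume.restrict (V ∩ interior K), p ∈ V ∩ interior K :=
    ae_restrict_mem (hVo.inter isOpen_interior).measurableSet
  have : (ae (volume.restrict (V ∩ interior K))).NeBot := by
    rwa [ae_neBot, Ne, Measure.restrict_eq_zero]
  obtain ⟨p, hp, hd, hpV, hpK⟩ := (hae.and (hdiff.and hmem)).exists
  have hux : |ux u p| ≤ C := (ENNReal.ofReal_le_ofReal_iff hC).1 (hp.trans hle)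
  have htan := hconc.le_add_of_hasFDerivAt (interior_subset hpK) hm hd.hasFDerivAt
  have hsplit : fderiv ℝ u p (m - p) = (m.1 - p.1) * ux u p + (m.2 - p.2) * uy u p := by
    have : m - p = (m.1 - p.1) • ((1 : ℝ), (0 : ℝ)) + (m.2 - p.2) • ((0 : ℝ), (1 : ℝ)) := by
      ext <;> simp
    rw [this, map_add, map_smul, map_smul]; rfl
  have h₁ : (m.1 - p.1) * ux u p ≤ C * |m.1 - p.1| := by
    refine (le_abs_self _).trans ?_
    rw [abs_mul, mul_comm]
    exact mul_le_mul_of_nonneg_right hux (abs_nonneg _)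
  have h₂ : (m.2 - p.2) * uy u p ≤ |m.2 - p.2| := by
    refine (le_abs_self _).trans ?_
    rw [abs_mul]
    exact mul_le_of_le_one_right (abs_nonneg _) (huy p)
  have hpV' : C * |m.1 - p.1| + |m.2 - p.2| < u m - u p := hpV
  linarith

/-- If `φ` has infinite slope at `a` and `ψ ≤ φ` is convex, then the gap `φ - ψ` is
not bounded by a multiple of the distance to `a`. -/
theorem exists_gap_of_slope_left {a b : ℝ} (hab : a < b) {φ ψ : ℝ → ℝ}
    (hψ : ConvexOn ℝ (Icc a b) ψ) (hle : ψ a ≤ φ a)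
    (hslope : ∀ C : ℝ, ∃ x ∈ Ioc a b, C < (φ x - φ a) / (x - a)) (C : ℝ) :
    ∃ x ∈ Ioo a b, C * (x - a) < φ x - ψ x := by
  set M := (ψ b - ψ a) / (b - a) with hM
  set M' := (φ b - φ a) / (b - a) with hM'
  obtain ⟨x, hx, hlt⟩ := hslope (max (C + M) M')
  have hxb : x < b := by
    refine lt_of_le_of_ne hx.2 ?_
    rintro rfl
    exact absurd hlt (not_lt.2 (le_max_right _ _))
  refine ⟨x, ⟨hx.1, hxb⟩, ?_⟩
  have hxa : 0 < x - a := sub_pos.2 hx.1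
  have h₁ := (le_max_left (C + M) M').trans_lt hlt
  rw [lt_div_iff₀ hxa] at h₁
  have h₂ : (ψ x - ψ a) / (x - a) ≤ M := by
    have := hψ.secant_mono (left_mem_Icc.2 hab.le) (Ioc_subset_Icc_self hx)
      (right_mem_Icc.2 hab.le) hx.1.ne' hab.ne' hx.2
    simpa [hM] using this
  rw [div_le_iff₀ hxa] at h₂
  nlinarith

/-- The counterpart of `exists_gap_of_slope_left` at the right endpoint. -/
theorem exists_gap_of_slope_right {a b : ℝ} (hab : a < b) {φ ψ : ℝ → ℝ}
    (hψ : ConvexOn ℝ (Icc a b) ψ) (hle : ψ b ≤ φ b)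
    (hslope : ∀ C : ℝ, ∃ x ∈ Ico a b, (φ b - φ x) / (b - x) < C) (C : ℝ) :
    ∃ x ∈ Ioo a b, C * (b - x) < φ x - ψ x := by
  set M := (ψ b - ψ a) / (b - a) with hM
  set M' := (φ b - φ a) / (b - a) with hM'
  obtain ⟨x, hx, hlt⟩ := hslope (min (M - C) M')
  have hax : a < x := by
    refine lt_of_le_of_ne hx.1 ?_
    rintro rfl
    exact absurd hlt (not_lt.2 (min_le_right _ _))
  refine ⟨x, ⟨hax, hx.2⟩, ?_⟩
  have hxb : 0 < b - x := sub_pos.2 hx.2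
  have h₁ := hlt.trans_le (min_le_left (M - C) M')
  rw [div_lt_iff₀ hxb] at h₁
  have h₂ : M ≤ (ψ b - ψ x) / (b - x) := by
    have := hψ.secant_mono (right_mem_Icc.2 hab.le) (left_mem_Icc.2 hab.le)
      (Ico_subset_Icc_self hx) hab.ne hx.2.ne hx.1
    rwa [← neg_div_neg_eq, neg_sub, neg_sub, ← neg_div_neg_eq (ψ x - ψ b), neg_sub, neg_sub] at this
  rw [le_div_iff₀ hxb] at h₂
  nlinarith

/-- A nonnegative concave function that is positive at an endpoint `p` of an interval is not
bounded by a multiple of the distance to `p`. -/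
theorem exists_gap_of_pos {a b : ℝ} (hab : a < b) {g : ℝ → ℝ} (hg : ConcaveOn ℝ (Icc a b) g)
    (hnonneg : ∀ x ∈ Icc a b, 0 ≤ g x) {C : ℝ} (hC : 0 < C) :
    (0 < g a → ∃ x ∈ Ioo a b, C * (x - a) < g x) ∧
      (0 < g b → ∃ x ∈ Ioo a b, C * (b - x) < g x) := by
  have ha := left_mem_Icc.2 hab.le
  have hb := right_mem_Icc.2 hab.le
  have hL : 0 < b - a := sub_pos.2 hab
  have key : ∀ G > 0, ∃ t : ℝ, 0 < t ∧ t < 1 ∧ C * (t * (b - a)) < (1 - t) * G := by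
    intro G hG
    have hden : 0 < 2 * (C * (b - a) + G) := by positivity
    refine ⟨G / (2 * (C * (b - a) + G)), by positivity, ?_, ?_⟩
    · rw [div_lt_one hden]; nlinarith [mul_pos hC hL]
    · have : G / (2 * (C * (b - a) + G)) * (C * (b - a) + G) = G / 2 := by field_simp
      nlinarith
  constructor
  · intro hpos
    obtain ⟨t, ht0, ht1, ht⟩ := key _ hpos
    have hc := hg.2 ha hb (sub_nonneg.2 ht1.le) ht0.le (by ring)
    have hgb := mul_nonneg ht0.le (hnonneg b hb)
    simp only [smul_eq_mul] at hc
    refine ⟨(1 - t) * a + t * b, ⟨by nlinarith, by nlinarith⟩, ?_⟩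
    have : (1 - t) * a + t * b - a = t * (b - a) := by ring
    rw [this]; linarith
  · intro hpos
    obtain ⟨t, ht0, ht1, ht⟩ := key _ hpos
    have hc := hg.2 ha hb ht0.le (sub_nonneg.2 ht1.le) (by ring)
    have hga := mul_nonneg ht0.le (hnonneg a ha)
    simp only [smul_eq_mul] at hc
    refine ⟨t * a + (1 - t) * b, ⟨by nlinarith, by nlinarith⟩, ?_⟩
    have : b - (t * a + (1 - t) * b) = t * (b - a) := by ring
    rw [this]; linarith

/-- The region between a convex and a concave function contains a full rectangle around any
vertical segment strictly inside it, so stretching makes the distance to its complement large. -/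
theorem exists_lt_stretchDist {a b : ℝ} {φ₁ φ₂ : ℝ → ℝ} {K : Set (ℝ × ℝ)}
    (hφ₁ : ConvexOn ℝ (Icc a b) φ₁) (hφ₂ : ConcaveOn ℝ (Icc a b) φ₂)
    (hK : K = {z : ℝ × ℝ | z.1 ∈ Icc a b ∧ z.2 ∈ Icc (φ₁ z.1) (φ₂ z.1)}) (hne : Kᶜ.Nonempty)
    {x y D : ℝ} (hx : x ∈ Ioo a b) (hD : 0 ≤ D) (h₁ : φ₁ x < y - D) (h₂ : y + D < φ₂ x) :
    ∃ N, D < stretchDist K N (x, y) := by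
  obtain ⟨D', hDD', hD'⟩ := exists_between (lt_min (lt_sub_comm.1 h₁) (lt_sub_iff_add_lt'.2 h₂))
  have hnhds : interior (Icc a b) ∈ nhds x := by rw [interior_Icc]; exact Ioo_mem_nhds hx.1 hx.2
  have hc₁ := hφ₁.continuousOn_interior.continuousAt hnhds
  have hc₂ := hφ₂.continuousOn_interior.continuousAt hnhds
  have hev := ((hc₁.eventually_lt_const (lt_sub_comm.1 (hD'.trans_le (min_le_left _ _)))).and
    (hc₂.eventually_const_lt (lt_sub_iff_add_lt'.1 (hD'.trans_le (min_le_right _ _))))).and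
    (Ioo_mem_nhds hx.1 hx.2)
  obtain ⟨δ, hδ, hball⟩ := Metric.eventually_nhds_iff.1 hev
  refine ⟨D' / δ, hDD'.trans_le ((Metric.le_infDist (hne.image _)).2 ?_)⟩
  rintro _ ⟨p, hp, rfl⟩
  simp only [stretchFst_apply, Prod.dist_eq, Real.dist_eq, ← mul_sub, abs_mul]
  by_contra! hlt
  obtain ⟨hlt₁, hlt₂⟩ := max_lt_iff.1 hlt
  have hDpos : 0 < D' := hD.trans_lt hDD'
  rw [abs_of_pos (div_pos hDpos hδ), div_mul_eq_mul_div, div_lt_iff₀ hδ] at hlt₁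
  have hpx : dist p.1 x < δ := by
    rw [dist_comm, Real.dist_eq]
    exact lt_of_mul_lt_mul_left hlt₁ hDpos.le
  obtain ⟨⟨hp₁, hp₂⟩, hpI⟩ := hball hpx
  obtain ⟨h₃, h₄⟩ := abs_lt.1 hlt₂
  apply hp
  rw [hK]
  exact ⟨Ioo_subset_Icc_self hpI, by linarith, by linarith⟩

theorem convex_region {s : Set ℝ} {φ₁ φ₂ : ℝ → ℝ} (hφ₁ : ConvexOn ℝ s φ₁)
    (hφ₂ : ConcaveOn ℝ s φ₂) :
    Convex ℝ {z : ℝ × ℝ | z.1 ∈ s ∧ z.2 ∈ Icc (φ₁ z.1) (φ₂ z.1)} := by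
  convert hφ₁.convex_epigraph.inter hφ₂.convex_hypograph using 1
  ext z
  simp only [mem_ofPred_eq, mem_Icc, mem_inter_iff]
  tauto

/-- Theorem 8, infinite case: if at least one vertical line of support of
`Ω` is not angular (positive gap at an endpoint, or an infinite one-sided derivative,
expressed via unbounded difference quotients), then `K_∞(Ω) = ∞`: for every `C > 0` there
is a nonzero `u ∈ 𝒰_Ω` with `‖u_x‖_∞ > C ‖u_y‖_∞`. -/
theorem stmt_19 (a b : ℝ) (hab : a < b) (φ₁ φ₂ : ℝ → ℝ)
    (hφ₁ : ConvexOn ℝ (Icc a b) φ₁) (hφ₂ : ConcaveOn ℝ (Icc a b) φ₂)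
    (hφle : ∀ x ∈ Icc a b, φ₁ x ≤ φ₂ x)
    (Ω : Set (ℝ × ℝ))
    (hΩ : Ω = {z : ℝ × ℝ | z.1 ∈ Icc a b ∧ z.2 ∈ Icc (φ₁ z.1) (φ₂ z.1)})
    (hΩc : IsCompact Ω) (hΩint : (interior Ω).Nonempty)
    (hnotang :
      φ₁ a < φ₂ a ∨ φ₁ b < φ₂ b ∨
      (∀ C : ℝ, ∃ x ∈ Ioc a b, C < (φ₂ x - φ₂ a) / (x - a)) ∨
      (∀ C : ℝ, ∃ x ∈ Ioc a b, (φ₁ x - φ₁ a) / (x - a) < C) ∨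
      (∀ C : ℝ, ∃ x ∈ Ico a b, (φ₂ b - φ₂ x) / (b - x) < C) ∨
      (∀ C : ℝ, ∃ x ∈ Ico a b, C < (φ₁ b - φ₁ x) / (b - x))) :
    ∀ C > (0 : ℝ), ∃ u : ℝ × ℝ → ℝ, MemU Ω u ∧ (∃ z ∈ Ω, u z ≠ 0) ∧
      ENNReal.ofReal C * LinfN Ω (uy u) < LinfN Ω (ux u) := by
  have hclosed := hΩc.isClosed
  have hconv : Convex ℝ Ω := hΩ ▸ convex_region hφ₁ hφ₂
  intro C hC
  have hgap : ∃ x ∈ Ioo a b, ∃ q : ℝ, q ∉ Icc a b ∧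
      ∀ w ∈ Icc a b, w ∈ segment ℝ x q → 2 * C * |x - w| < φ₂ x - φ₁ x := by
    have h2C : 0 < 2 * C := by positivity
    have hleft : (∃ x ∈ Ioo a b, 2 * C * (x - a) < φ₂ x - φ₁ x) → ∃ x ∈ Ioo a b, ∃ q : ℝ,
        q ∉ Icc a b ∧ ∀ w ∈ Icc a b, w ∈ segment ℝ x q → 2 * C * |x - w| < φ₂ x - φ₁ x := by
      rintro ⟨x, hx, hlt⟩
      refine ⟨x, hx, a - 1, fun h => by linarith [h.1], fun w hw hwq => lt_of_le_of_lt ?_ hlt⟩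
      rw [segment_symm, segment_eq_Icc (by linarith [hx.1])] at hwq
      rw [abs_of_nonneg (sub_nonneg.2 hwq.2)]
      exact mul_le_mul_of_nonneg_left (by linarith [hw.1]) h2C.le
    have hright : (∃ x ∈ Ioo a b, 2 * C * (b - x) < φ₂ x - φ₁ x) → ∃ x ∈ Ioo a b, ∃ q : ℝ,
        q ∉ Icc a b ∧ ∀ w ∈ Icc a b, w ∈ segment ℝ x q → 2 * C * |x - w| < φ₂ x - φ₁ x := by
      rintro ⟨x, hx, hlt⟩
      refine ⟨x, hx, b + 1, fun h => by linarith [h.2], fun w hw hwq => lt_of_le_of_lt ?_ hlt⟩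
      rw [segment_eq_Icc (by linarith [hx.2])] at hwq
      rw [abs_sub_comm, abs_of_nonneg (sub_nonneg.2 hwq.1)]
      exact mul_le_mul_of_nonneg_left (by linarith [hw.2]) h2C.le
    have hla := hφle a (left_mem_Icc.2 hab.le)
    have hlb := hφle b (right_mem_Icc.2 hab.le)
    have hpos := exists_gap_of_pos hab (hφ₂.sub hφ₁)
      (fun x hx => sub_nonneg.2 (hφle x hx)) h2C
    rcases hnotang with h | h | h | h | h | h
    · exact hleft (hpos.1 (sub_pos.2 h))
    · exact hright (hpos.2 (sub_pos.2 h))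
    · exact hleft (exists_gap_of_slope_left hab hφ₁ hla h _)
    · obtain ⟨x, hx, hlt⟩ := exists_gap_of_slope_left (φ := -φ₁) (ψ := -φ₂) hab hφ₂.neg
        (neg_le_neg hla) (fun K => by
          obtain ⟨x, hx, hlt⟩ := h (-K)
          refine ⟨x, hx, ?_⟩
          rw [lt_neg, ← neg_div] at hlt
          convert hlt using 2
          simp only [Pi.neg_apply]; ring) (2 * C)
      exact hleft ⟨x, hx, by simp only [Pi.neg_apply] at hlt; linarith⟩
    · exact hright (exists_gap_of_slope_right hab hφ₁ hlb h _)
    · obtain ⟨x, hx, hlt⟩ := exists_gap_of_slope_right (φ := -φ₁) (ψ := -φ₂) hab hφ₂.neg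
        (neg_le_neg hlb) (fun K => by
          obtain ⟨x, hx, hlt⟩ := h (-K)
          refine ⟨x, hx, ?_⟩
          rw [neg_lt, ← neg_div] at hlt
          convert hlt using 2
          simp only [Pi.neg_apply]; ring) (2 * C)
      exact hright ⟨x, hx, by simp only [Pi.neg_apply] at hlt; linarith⟩
  obtain ⟨x, hx, q, hq, hgap⟩ := hgap
  set y := (φ₁ x + φ₂ x) / 2 with hy
  have hxI := Ioo_subset_Icc_self hx
  have hle := hφle x hxI
  have hm : (x, y) ∈ Ω := by
    rw [hΩ]
    exact ⟨hxI, by simp only [hy]; linarith, by simp only [hy]; linarith⟩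
  have hqΩ : (q, y) ∉ Ω := fun h => by
    rw [hΩ] at h
    exact hq h.1
  have hne : Ωᶜ.Nonempty := ⟨_, hqΩ⟩
  obtain ⟨w, hws, hwf⟩ := (convex_segment (𝕜 := ℝ) (x, y) (q, y)).isPreconnected.exists_mem_frontier
    hclosed (left_mem_segment ℝ _ _) hm (right_mem_segment ℝ _ _) hqΩ
  rw [← Prod.image_mk_segment_left] at hws
  obtain ⟨w₁, hws, rfl⟩ := hws
  have hwΩ : (w₁, y) ∈ Ω := hclosed.frontier_subset hwf
  have hw₁ : w₁ ∈ Icc a b := by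
    rw [hΩ] at hwΩ
    exact hwΩ.1
  have hlt := hgap w₁ hw₁ hws
  have hD : 0 ≤ C * |x - w₁| := by positivity
  obtain ⟨N, hN⟩ := exists_lt_stretchDist hφ₁ hφ₂ hΩ hne (y := y) hx hD
    (by simp only [hy]; linarith) (by simp only [hy]; linarith)
  have hmem := memU_stretchDist hconv hne N
  refine ⟨stretchDist Ω N, hmem, ⟨_, hm, (hD.trans_lt hN).ne'⟩, ?_⟩
  have huy : LinfN Ω (uy (stretchDist Ω N)) ≤ 1 :=
    essSup_le_of_ae_le _ (Filter.Eventually.of_forall fun z =>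
      ENNReal.ofReal_le_one.2 (abs_uy_stretchDist_le Ω N z))
  calc ENNReal.ofReal C * LinfN Ω (uy (stretchDist Ω N)) ≤ ENNReal.ofReal C :=
        mul_le_of_le_one_right' huy
    _ < LinfN Ω (ux (stretchDist Ω N)) :=
        lt_linfN_ux (lipschitzWith_stretchDist Ω N) hmem.2.1 hΩint (abs_uy_stretchDist_le Ω N)
          hC.le hm (subset_closure hwΩ) (stretchDist_eq_zero hwf) (by simpa using hN)
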